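/- Let P = {p(a,b|x,y)} be the box of a 2×n quantum box with k outcomes for each of Alice's n inputs and l₁, l₂ outcomes for Bob's two inputs; put l = max{l₁, l₂}, μ₀ = (5 + √17)/2 and κ = (1/μ₀)·((μ₀ − 2)/(μ₀ − 1))². Then for every real coefficient family s(a,b,x,y), the Bell functional satisfies β(P) ≤ β_alg^max − (κ/(2 k l l₁ l₂))·(β_alg^max − β_det^max), where β_alg^max is the maximum of β over all boxes with the same input/outcome sets and β_det^max its maximum over all deterministic boxes. In particular no 2×n quantum box can attain the algebraic maximum of a Bell inequality that is not attained by a deterministic box. -/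

import Mathlib

/-! A pair of outcomes `(b, b')` of Bob, chosen once and for all, completes to a deterministic box
that occurs in the quantum box with weight at least `c = κ / (2 k l l₁ l₂)`, so the
quantum box is a mixture `c • D + (1 - c) • Q` of that deterministic box and some other box,
whence the bound.

To find the pair, put `t b b' = Tr ((1 ⊗ N'_b' N_b) ρ)`. Completeness of Bob's measurements gives
`∑ t b b' = 1` whatever the dimension, so by Cauchy–Schwarz some pair satisfies
`‖t b b'‖² > k c (p_b + q_b')`, where `p` and `q` are Bob's two marginals
(`exists_pair_of_sum_eq_one`; this only needs `κ < 1`). On the other hand, for any input `x`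
of Alice, `t b b' = ∑ a, Tr ((M_a ⊗ N'_b' N_b) ρ)`, and each term has squared modulus at most
`p(a,b|x,y) p(a,b'|x,y')` (`normSq_trace_kronecker_le`). If for every `a` one of the two factors
were below `c`, then `‖t b b'‖² ≤ k c (p_b + q_b')`. Hence every input `x` has an outcome `a` with
both probabilities at least `c`. -/

/-- A box: a family of probability distributions `p(a,b|x,y)`. -/
def IsBox {X Y A B : Type*} [Fintype A] [Fintype B]
    (P : X → Y → A → B → ℝ) : Prop :=
  (∀ x y a b, 0 ≤ P x y a b) ∧ ∀ x y, (∑ a, ∑ b, P x y a b) = 1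

/-- The deterministic box given by response functions `f` (Alice) and `g` (Bob). -/
def detBox {X Y A B : Type*} [DecidableEq A] [DecidableEq B]
    (f : X → A) (g : Y → B) : X → Y → A → B → ℝ :=
  fun x y a b => if a = f x ∧ b = g y then 1 else 0

/-- The Bell functional `β(P) = Σ s(a,b,x,y) p(a,b|x,y)`. -/
def bell {X Y A B : Type*} [Fintype X] [Fintype Y] [Fintype A] [Fintype B]
    (s : X → Y → A → B → ℝ) (P : X → Y → A → B → ℝ) : ℝ :=
  ∑ x, ∑ y, ∑ a, ∑ b, s x y a b * P x y a b

/-- `β_alg^max`: the supremum of the Bell functional over all boxes. -/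
noncomputable def bellAlgMax {X Y A B : Type*} [Fintype X] [Fintype Y] [Fintype A] [Fintype B]
    (s : X → Y → A → B → ℝ) : ℝ :=
  sSup {r : ℝ | ∃ Q, IsBox Q ∧ bell s Q = r}

/-- `β_det^max`: the supremum of the Bell functional over all deterministic boxes. -/
noncomputable def bellDetMax {X Y A B : Type*} [Fintype X] [Fintype Y] [Fintype A] [Fintype B]
    [DecidableEq A] [DecidableEq B] (s : X → Y → A → B → ℝ) : ℝ :=
  sSup {r : ℝ | ∃ f g, bell s (detBox f g) = r}


open Matrix
open scoped Kronecker ComplexOrder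

/-- A density matrix: positive semidefinite with trace 1. -/
def IsDensityMatrix {n : Type*} [Fintype n] (ρ : Matrix n n ℂ) : Prop :=
  ρ.PosSemidef ∧ ρ.trace = 1

/-- The optimal truncation parameter `μ₀ = (5 + √17)/2`. -/
noncomputable def mu0 : ℝ := (5 + Real.sqrt 17) / 2

/-- The constant `κ = (1/μ₀)·((μ₀−2)/(μ₀−1))² ≈ 0.1134`. -/
noncomputable def kappa : ℝ := (1 / mu0) * ((mu0 - 2) / (mu0 - 1)) ^ 2

/-- The box of a `2×n` quantum box: Alice's inputs are `Fin n` with outcomes `Fin k`,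
Bob's inputs are `Fin 2` with outcome set `Fin (max l₁ l₂)` (outcomes `≥ l₁`, resp.
`≥ l₂`, have probability zero). -/
noncomputable def quantumBox {dA dB : ℕ} (n k l₁ l₂ : ℕ)
    (ρAB : Matrix (Fin dA × Fin dB) (Fin dA × Fin dB) ℂ)
    (M : Fin n → Fin k → Matrix (Fin dA) (Fin dA) ℂ)
    (N : Fin l₁ → Matrix (Fin dB) (Fin dB) ℂ)
    (N' : Fin l₂ → Matrix (Fin dB) (Fin dB) ℂ) :
    Fin n → Fin 2 → Fin k → Fin (max l₁ l₂) → ℝ :=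
  fun x y a b =>
    if y = 0 then
      if h : (b : ℕ) < l₁ then (((M x a) ⊗ₖ (N ⟨b, h⟩)) * ρAB).trace.re else 0
    else
      if h : (b : ℕ) < l₂ then (((M x a) ⊗ₖ (N' ⟨b, h⟩)) * ρAB).trace.re else 0

/-! ### Trace inequalities -/

lemma posSemidef_exists_factor {n : Type*} [Fintype n] [DecidableEq n] {A : Matrix n n ℂ}
    (hA : A.PosSemidef) : ∃ R : Matrix n n ℂ, A = Rᴴ * R := by
  open scoped MatrixOrder in
  exact CStarAlgebra.nonneg_iff_eq_star_mul_self.mp hA.nonneg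

/-- Cauchy–Schwarz for the Frobenius inner product. -/
lemma normSq_trace_conjTranspose_mul_le {m n : Type*} [Fintype m] [Fintype n]
    (A B : Matrix m n ℂ) :
    ‖(Aᴴ * B).trace‖ ^ 2 ≤ (Aᴴ * A).trace.re * (Bᴴ * B).trace.re := by
  have key : ∀ C D : Matrix m n ℂ,
      (Cᴴ * D).trace = ∑ z : n × m, star (C z.2 z.1) * D z.2 z.1 := by
    intro C D
    simp [Matrix.trace, Matrix.mul_apply, Fintype.sum_prod_type]
  have self : ∀ C : Matrix m n ℂ, (Cᴴ * C).trace.re = ∑ z : n × m, ‖C z.2 z.1‖ ^ 2 := by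
    intro C
    rw [key, Complex.re_sum]
    refine Finset.sum_congr rfl fun z _ => ?_
    rw [← Complex.normSq_eq_norm_sq, Complex.normSq_apply]
    simp
  rw [self, self, key]
  calc ‖∑ z : n × m, star (A z.2 z.1) * B z.2 z.1‖ ^ 2
      ≤ (∑ z : n × m, ‖A z.2 z.1‖ * ‖B z.2 z.1‖) ^ 2 := by
        gcongr
        refine (norm_sum_le _ _).trans (le_of_eq ?_)
        simp
    _ ≤ _ := Finset.sum_mul_sq_le_sq_mul_sq _ _ _

/-- The previous inequality for the semi-inner product `(X, Y) ↦ Tr (X* Y ρ)`. -/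
lemma normSq_trace_state_le {m n : Type*} [Fintype m] [Fintype n] [DecidableEq n]
    {ρ : Matrix n n ℂ} (hρ : ρ.PosSemidef) (X Y : Matrix m n ℂ) :
    ‖(Xᴴ * Y * ρ).trace‖ ^ 2 ≤ (Xᴴ * X * ρ).trace.re * (Yᴴ * Y * ρ).trace.re := by
  obtain ⟨R, rfl⟩ := posSemidef_exists_factor hρ
  have key : ∀ U V : Matrix m n ℂ, (Uᴴ * V * (Rᴴ * R)).trace = ((U * Rᴴ)ᴴ * (V * Rᴴ)).trace := by
    intro U V
    rw [Matrix.conjTranspose_mul, Matrix.conjTranspose_conjTranspose, ← Matrix.mul_assoc,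
      Matrix.trace_mul_comm]
    simp only [Matrix.mul_assoc]
  rw [key, key, key]
  exact normSq_trace_conjTranspose_mul_le _ _

lemma trace_mul_re_nonneg {n : Type*} [Fintype n] [DecidableEq n]
    {A ρ : Matrix n n ℂ} (hA : A.PosSemidef) (hρ : ρ.PosSemidef) : 0 ≤ (A * ρ).trace.re := by
  obtain ⟨R, rfl⟩ := posSemidef_exists_factor hρ
  rw [← Matrix.mul_assoc, Matrix.trace_mul_comm, ← Matrix.mul_assoc]
  exact (Complex.nonneg_iff.mp (hA.mul_mul_conjTranspose_same R).trace_nonneg).1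

lemma posSemidef_sub_mul_self {n : Type*} [Fintype n] [DecidableEq n]
    {E : Matrix n n ℂ} (hE : E.PosSemidef) (hE1 : (1 - E).PosSemidef) :
    (E - E * E).PosSemidef := by
  have h1 := hE1.mul_mul_conjTranspose_same E
  have h2 := hE.mul_mul_conjTranspose_same (1 - E)
  rw [hE.isHermitian.eq] at h1
  rw [hE1.isHermitian.eq] at h2
  have : E - E * E = E * (1 - E) * E + (1 - E) * E * (1 - E) := by noncomm_ring
  rw [this]
  exact h1.add h2

lemma trace_kronecker_mul_self_le {m n : Type*} [Fintype m] [Fintype n] [DecidableEq m]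
    [DecidableEq n] {ρ : Matrix (m × n) (m × n) ℂ} (hρ : ρ.PosSemidef)
    {M : Matrix m m ℂ} (hM : M.PosSemidef) {E : Matrix n n ℂ} (hE : E.PosSemidef)
    (hE1 : (1 - E).PosSemidef) :
    ((M ⊗ₖ (E * E)) * ρ).trace.re ≤ ((M ⊗ₖ E) * ρ).trace.re := by
  have h := trace_mul_re_nonneg (hM.kronecker (posSemidef_sub_mul_self hE hE1)) hρ
  have hs : M ⊗ₖ E = M ⊗ₖ (E - E * E) + M ⊗ₖ (E * E) := by
    rw [← Matrix.kronecker_add, sub_add_cancel]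
  rw [hs, Matrix.add_mul, Matrix.trace_add, Complex.add_re]
  linarith

/-- The correlation between two effects `E`, `F` of Bob, weighted by an effect `M` of Alice, is
controlled by the two joint probabilities. -/
lemma normSq_trace_kronecker_le {m n : Type*} [Fintype m] [Fintype n] [DecidableEq m]
    [DecidableEq n] {ρ : Matrix (m × n) (m × n) ℂ} (hρ : ρ.PosSemidef)
    {M : Matrix m m ℂ} (hM : M.PosSemidef) {E F : Matrix n n ℂ} (hE : E.PosSemidef)
    (hE1 : (1 - E).PosSemidef) (hF : F.PosSemidef) (hF1 : (1 - F).PosSemidef) :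
    ‖((M ⊗ₖ (F * E)) * ρ).trace‖ ^ 2
      ≤ ((M ⊗ₖ E) * ρ).trace.re * ((M ⊗ₖ F) * ρ).trace.re := by
  obtain ⟨R, hR⟩ := posSemidef_exists_factor hM
  have key : ∀ U V : Matrix n n ℂ, U.PosSemidef →
      M ⊗ₖ (U * V) = (R ⊗ₖ U)ᴴ * (R ⊗ₖ V) := by
    intro U V hU
    rw [Matrix.conjTranspose_kronecker, ← Matrix.mul_kronecker_mul, ← hR, hU.isHermitian.eq]
  have h := normSq_trace_state_le hρ (R ⊗ₖ F) (R ⊗ₖ E)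
  rw [← key F E hF, ← key F F hF, ← key E E hE] at h
  rw [mul_comm]
  refine h.trans (mul_le_mul (trace_kronecker_mul_self_le hρ hM hF hF1)
    (trace_kronecker_mul_self_le hρ hM hE hE1) ?_ ?_)
  · rw [key E E hE]
    exact trace_mul_re_nonneg (Matrix.posSemidef_conjTranspose_mul_self _) hρ
  · exact trace_mul_re_nonneg (hM.kronecker hF) hρ

lemma posSemidef_one_sub_of_sum {ι n : Type*} [Fintype ι] [DecidableEq n]
    [Finite n] {N : ι → Matrix n n ℂ} (hN : ∀ b, (N b).PosSemidef) (hsum : ∑ b, N b = 1) (b : ι) :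
    (1 - N b).PosSemidef := by
  classical
  rw [← hsum, ← Finset.add_sum_erase _ N (Finset.mem_univ b), add_sub_cancel_left]
  exact Matrix.posSemidef_sum _ fun i _ => hN i

lemma sum_trace_kronecker_left {ι m n : Type*} [Fintype ι] [Fintype m] [Fintype n]
    (ρ : Matrix (m × n) (m × n) ℂ) (M : ι → Matrix m m ℂ) (E : Matrix n n ℂ) :
    ∑ a, ((M a ⊗ₖ E) * ρ).trace = (((∑ a, M a) ⊗ₖ E) * ρ).trace := by
  rw [← Matrix.trace_sum, ← Finset.sum_mul]
  congr 2
  ext i j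
  simp [Matrix.sum_apply, Finset.sum_mul]

lemma sum_trace_kronecker_right {ι m n : Type*} [Fintype ι] [Fintype m] [Fintype n]
    (ρ : Matrix (m × n) (m × n) ℂ) (M : Matrix m m ℂ) (N : ι → Matrix n n ℂ) :
    ∑ b, ((M ⊗ₖ N b) * ρ).trace = ((M ⊗ₖ (∑ b, N b)) * ρ).trace := by
  rw [← Matrix.trace_sum, ← Finset.sum_mul]
  congr 2
  ext i j
  simp [Matrix.sum_apply, Finset.mul_sum]

/-! ### Choosing Bob's outcomes and Alice's response -/

lemma exists_pair_of_sum_eq_one {l₁ l₂ : ℕ} {t : Fin l₁ → Fin l₂ → ℂ} {p : Fin l₁ → ℝ}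
    {q : Fin l₂ → ℝ} {C : ℝ} (ht : ∑ b, ∑ b', t b b' = 1) (hp : ∑ b, p b = 1)
    (hq : ∑ b', q b' = 1) (hC : C * (l₁ * l₂ * (l₁ + l₂)) < 1) :
    ∃ b b', C * (p b + q b') < ‖t b b'‖ ^ 2 := by
  by_contra! hcon
  have h1 : (1 : ℝ) ≤ (∑ z : Fin l₁ × Fin l₂, ‖t z.1 z.2‖) ^ 2 := by
    have : ‖∑ z : Fin l₁ × Fin l₂, t z.1 z.2‖ = 1 := by
      rw [Fintype.sum_prod_type, ht, norm_one]
    have h2 := norm_sum_le Finset.univ fun z : Fin l₁ × Fin l₂ => t z.1 z.2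
    rw [this] at h2
    nlinarith
  have h2 := sq_sum_le_card_mul_sum_sq (s := (Finset.univ : Finset (Fin l₁ × Fin l₂)))
    (f := fun z => ‖t z.1 z.2‖)
  have h3 : ∑ z : Fin l₁ × Fin l₂, ‖t z.1 z.2‖ ^ 2
      ≤ ∑ z : Fin l₁ × Fin l₂, C * (p z.1 + q z.2) :=
    Finset.sum_le_sum fun z _ => hcon z.1 z.2
  have h4 : ∑ z : Fin l₁ × Fin l₂, C * (p z.1 + q z.2) = C * (l₁ + l₂) := by
    rw [← Finset.mul_sum, Fintype.sum_prod_type]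
    simp only [Finset.sum_add_distrib, hq, Finset.sum_const, Finset.card_univ, Fintype.card_fin,
      nsmul_eq_mul, mul_one]
    rw [← Finset.mul_sum, hp]
    ring
  simp only [Finset.card_univ, Fintype.card_prod, Fintype.card_fin, Nat.cast_mul] at h2
  have h5 : (l₁ * l₂ : ℝ) * ∑ z : Fin l₁ × Fin l₂, ‖t z.1 z.2‖ ^ 2
      ≤ (l₁ * l₂ : ℝ) * (C * (l₁ + l₂)) := by
    gcongr
    exact h3.trans_eq h4
  linarith

lemma exists_common_outcome {k : ℕ} {w : Fin k → ℂ} {u v : Fin k → ℝ} {c : ℝ}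
    (hu : ∀ a, 0 ≤ u a) (hv : ∀ a, 0 ≤ v a) (hw : ∀ a, ‖w a‖ ^ 2 ≤ u a * v a)
    (h : k * c * (∑ a, u a + ∑ a, v a) < ‖∑ a, w a‖ ^ 2) : ∃ a, c ≤ u a ∧ c ≤ v a := by
  by_contra! hcon
  have h1 : ‖∑ a, w a‖ ^ 2 ≤ (∑ a, ‖w a‖) ^ 2 := by
    gcongr
    exact norm_sum_le _ _
  have h2 := sq_sum_le_card_mul_sum_sq (s := (Finset.univ : Finset (Fin k)))
    (f := fun a => ‖w a‖)
  simp only [Finset.card_univ, Fintype.card_fin] at h2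
  -- `u v = min(u, v) max(u, v) ≤ c (u + v)`
  have h3 : ∑ a, ‖w a‖ ^ 2 ≤ ∑ a, c * (u a + v a) := by
    refine Finset.sum_le_sum fun a _ => (hw a).trans ?_
    have hua := hu a
    have hva := hv a
    rcases lt_or_ge (u a) c with hc | hc
    · nlinarith
    · nlinarith [hcon a hc]
  rw [← Finset.mul_sum, Finset.sum_add_distrib] at h3
  have h4 : (k : ℝ) * ∑ a, ‖w a‖ ^ 2 ≤ k * (c * (∑ a, u a + ∑ a, v a)) := by gcongr
  linarith

/-! ### Boxes and Bell functionals -/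

lemma IsBox.le_one {X Y A B : Type*} [Fintype A] [Fintype B]
    {P : X → Y → A → B → ℝ} (hP : IsBox P) (x : X) (y : Y) (a : A)
    (b : B) :   P x y a b ≤ 1 := by
  rw [← hP.2 x y]
  refine (Finset.single_le_sum (f := fun b => P x y a b) (fun b _ => hP.1 x y a b)
    (Finset.mem_univ b)).trans ?_
  exact Finset.single_le_sum (f := fun a => ∑ b, P x y a b)
    (fun a _ => Finset.sum_nonneg fun b _ => hP.1 x y a b) (Finset.mem_univ a)

section Bell

variable {X Y A B : Type*} [Fintype X] [Fintype Y] [Fintype A] [Fintype B]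

lemma bell_le_bellAlgMax (s : X → Y → A → B → ℝ) {Q : X → Y → A → B → ℝ} (hQ : IsBox Q) :
    bell s Q ≤ bellAlgMax s := by
  refine le_csSup ⟨∑ x, ∑ y, ∑ a, ∑ b, |s x y a b|, ?_⟩ ⟨Q, hQ, rfl⟩
  rintro _ ⟨P, hP, rfl⟩
  unfold bell
  gcongr with x _ y _ a _ b _
  have h0 := hP.1 x y a b
  have h1 := hP.le_one x y a b
  nlinarith [le_abs_self (s x y a b), abs_nonneg (s x y a b)]

variable [DecidableEq A] [DecidableEq B]

lemma bell_detBox_le_bellDetMax (s : X → Y → A → B → ℝ) (f : X → A) (g : Y → B) :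
    bell s (detBox f g) ≤ bellDetMax s := by
  classical
  refine le_csSup (Set.Finite.bddAbove ?_) ⟨f, g, rfl⟩
  refine (Set.finite_range fun z : (X → A) × (Y → B) => bell s (detBox z.1 z.2)).subset ?_
  rintro _ ⟨f, g, rfl⟩
  exact ⟨(f, g), rfl⟩

/-- A box containing a deterministic box with weight `c` is a mixture of that deterministic box
and some other box, so it falls short of the algebraic maximum accordingly. -/
lemma bell_le_of_weight (s : X → Y → A → B → ℝ) {P : X → Y → A → B → ℝ} (hP : IsBox P)
    {c : ℝ} (hc0 : 0 ≤ c) (hc1 : c < 1) (f : X → A) (g : Y → B)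
    (h : ∀ x y, c ≤ P x y (f x) (g y)) :
    bell s P ≤ bellAlgMax s - c * (bellAlgMax s - bellDetMax s) := by
  have hc : 0 < 1 - c := sub_pos.mpr hc1
  let Q : X → Y → A → B → ℝ := fun x y a b => (P x y a b - c * detBox f g x y a b) / (1 - c)
  have hQ : IsBox Q := by
    refine ⟨fun x y a b => div_nonneg ?_ hc.le, fun x y => ?_⟩
    · unfold detBox
      split_ifs with hab
      · rw [hab.1, hab.2, mul_one]
        exact sub_nonneg.mpr (h x y)
      · simpa using hP.1 x y a b
    · have hD : ∑ a, ∑ b, detBox f g x y a b = 1 := by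
        simp [detBox, ite_and]
      simp only [Q, ← Finset.sum_div, Finset.sum_sub_distrib, ← Finset.mul_sum, hD, hP.2 x y,
        mul_one]
      exact div_self hc.ne'
  have hmix : bell s P = c * bell s (detBox f g) + (1 - c) * bell s Q := by
    simp only [bell, Finset.mul_sum, ← Finset.sum_add_distrib]
    refine Finset.sum_congr rfl fun x _ => Finset.sum_congr rfl fun y _ =>
      Finset.sum_congr rfl fun a _ => Finset.sum_congr rfl fun b _ => ?_
    simp only [Q]
    field_simp
    ring
  have h1 := mul_le_mul_of_nonneg_left (bell_detBox_le_bellDetMax s f g) hc0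
  have h2 := mul_le_mul_of_nonneg_left (bell_le_bellAlgMax s hQ) hc.le
  rw [hmix]
  linarith

end Bell

/-! ### The quantum box -/

lemma sum_fin_dite_of_le {l L : ℕ} (hl : l ≤ L) (F : Fin l → ℝ) :
    ∑ b : Fin L, (if h : (b : ℕ) < l then F ⟨b, h⟩ else 0) = ∑ b, F b := by
  obtain ⟨d, rfl⟩ := Nat.exists_eq_add_of_le hl
  simp [Fin.sum_univ_add]

lemma isBox_quantumBox {dA dB : ℕ} {n k l₁ l₂ : ℕ}
    {ρ : Matrix (Fin dA × Fin dB) (Fin dA × Fin dB) ℂ} (hρ : IsDensityMatrix ρ)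
    {M : Fin n → Fin k → Matrix (Fin dA) (Fin dA) ℂ}
    (hM : ∀ x a, (M x a).PosSemidef) (hMsum : ∀ x, ∑ a, M x a = 1)
    {N : Fin l₁ → Matrix (Fin dB) (Fin dB) ℂ}
    (hN : ∀ b, (N b).PosSemidef) (hNsum : ∑ b, N b = 1)
    {N' : Fin l₂ → Matrix (Fin dB) (Fin dB) ℂ}
    (hN' : ∀ b', (N' b').PosSemidef) (hN'sum : ∑ b', N' b' = 1) :
    IsBox (quantumBox n k l₁ l₂ ρ M N N') := by
  refine ⟨fun x y a b => ?_, fun x y => ?_⟩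
  · unfold quantumBox
    split_ifs
    · exact trace_mul_re_nonneg ((hM x a).kronecker (hN _)) hρ.1
    · exact le_rfl
    · exact trace_mul_re_nonneg ((hM x a).kronecker (hN' _)) hρ.1
    · exact le_rfl
  · have key : ∀ (l : ℕ) (E : Fin l → Matrix (Fin dB) (Fin dB) ℂ), ∑ b, E b = 1 →
        ∑ a, ∑ b, ((M x a ⊗ₖ E b) * ρ).trace.re = 1 := by
      intro l E hE
      simp only [← Complex.re_sum]
      simp only [sum_trace_kronecker_right, sum_trace_kronecker_left, hE, hMsum,
        Matrix.one_kronecker_one, Matrix.one_mul, hρ.2, Complex.one_re]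
    unfold quantumBox
    by_cases hy : y = 0
    · simp only [hy, if_true]
      rw [← key l₁ N hNsum]
      exact Finset.sum_congr rfl fun a _ =>
        sum_fin_dite_of_le (le_max_left l₁ l₂) fun b => ((M x a ⊗ₖ N b) * ρ).trace.re
    · simp only [hy, if_false]
      rw [← key l₂ N' hN'sum]
      exact Finset.sum_congr rfl fun a _ =>
        sum_fin_dite_of_le (le_max_right l₁ l₂) fun b => ((M x a ⊗ₖ N' b) * ρ).trace.re

lemma kappa_nonneg : 0 ≤ kappa := by
  have : 0 ≤ mu0 := by unfold mu0; positivity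
  unfold kappa
  positivity

lemma kappa_lt_one : kappa < 1 := by
  have h : 5 / 2 ≤ mu0 := by
    unfold mu0
    linarith [Real.sqrt_nonneg 17]
  have h1 : 1 / mu0 < 1 := by
    rw [div_lt_one (by linarith)]
    linarith
  have h2 : (mu0 - 2) / (mu0 - 1) ≤ 1 := by
    rw [div_le_one (by linarith)]
    linarith
  have h3 : 0 ≤ (mu0 - 2) / (mu0 - 1) := div_nonneg (by linarith) (by linarith)
  have h4 : 0 < 1 / mu0 := by positivity
  unfold kappa
  nlinarith [pow_le_one₀ (n := 2) h3 h2]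

/-- Universal bound on Bell values of `2×n` quantum boxes:
`β(P) ≤ β_alg^max − (κ/(2·k·l·l₁·l₂))·(β_alg^max − β_det^max)`. -/
theorem bell_bound_two_times_n {dA dB : ℕ} (n k l₁ l₂ : ℕ)
    (ρAB : Matrix (Fin dA × Fin dB) (Fin dA × Fin dB) ℂ)
    (hρAB : IsDensityMatrix ρAB)
    (M : Fin n → Fin k → Matrix (Fin dA) (Fin dA) ℂ)
    (hMpos : ∀ x a, (M x a).PosSemidef) (hMsum : ∀ x, ∑ a, M x a = 1)
    (N : Fin l₁ → Matrix (Fin dB) (Fin dB) ℂ)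
    (hNpos : ∀ b, (N b).PosSemidef) (hNsum : ∑ b, N b = 1)
    (N' : Fin l₂ → Matrix (Fin dB) (Fin dB) ℂ)
    (hN'pos : ∀ b', (N' b').PosSemidef) (hN'sum : ∑ b', N' b' = 1)
    (s : Fin n → Fin 2 → Fin k → Fin (max l₁ l₂) → ℝ) :
    bell s (quantumBox n k l₁ l₂ ρAB M N N')
      ≤ bellAlgMax s - (kappa / (2 * k * (max l₁ l₂ : ℕ) * l₁ * l₂))
          * (bellAlgMax s - bellDetMax s) := by
  set c : ℝ := kappa / (2 * k * (max l₁ l₂ : ℕ) * l₁ * l₂) with hc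
  have hc0 : 0 ≤ c := div_nonneg kappa_nonneg (by positivity)
  -- The denominator may vanish, since `k = 0` is possible when `n = 0`; then `c = 0`.
  have hcmul : c * (2 * k * (max l₁ l₂ : ℕ) * l₁ * l₂) < 1 := by
    rw [hc]
    rcases eq_or_ne (2 * k * (max l₁ l₂ : ℕ) * l₁ * l₂ : ℝ) 0 with h0 | h0
    · rw [h0]; simp
    · rw [div_mul_cancel₀ _ h0]; exact kappa_lt_one
  have hc1 : c < 1 := by
    have hcast : c = kappa / ((2 * k * max l₁ l₂ * l₁ * l₂ : ℕ) : ℝ) := by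
      rw [hc]; push_cast; rfl
    rw [hcast]
    rcases Nat.eq_zero_or_pos (2 * k * max l₁ l₂ * l₁ * l₂) with h0 | h0
    · rw [h0]; simp
    · exact (div_le_self kappa_nonneg (by exact_mod_cast h0)).trans_lt kappa_lt_one
  have hone : ((1 : Matrix (Fin dA) (Fin dA) ℂ) ⊗ₖ (1 : Matrix (Fin dB) (Fin dB) ℂ)
      * ρAB).trace = 1 := by
    rw [Matrix.one_kronecker_one, Matrix.one_mul, hρAB.2]
  have hmarg : ∀ (l : ℕ) (E : Fin l → Matrix (Fin dB) (Fin dB) ℂ), ∑ b, E b = 1 →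
      ∑ b, (((1 : Matrix (Fin dA) (Fin dA) ℂ) ⊗ₖ E b) * ρAB).trace.re = 1 := by
    intro l E hE
    rw [← Complex.re_sum, sum_trace_kronecker_right, hE, hone, Complex.one_re]
  have hC : k * c * ((l₁ : ℝ) * l₂ * (l₁ + l₂)) < 1 := by
    have h1 : (l₁ : ℝ) ≤ (max l₁ l₂ : ℕ) := by exact_mod_cast le_max_left l₁ l₂
    have h2 : (l₂ : ℝ) ≤ (max l₁ l₂ : ℕ) := by exact_mod_cast le_max_right l₁ l₂
    calc k * c * ((l₁ : ℝ) * l₂ * (l₁ + l₂))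
        ≤ k * c * ((l₁ : ℝ) * l₂ * ((max l₁ l₂ : ℕ) + (max l₁ l₂ : ℕ))) := by gcongr
      _ = c * (2 * k * (max l₁ l₂ : ℕ) * l₁ * l₂) := by ring
      _ < 1 := hcmul
  obtain ⟨b, b', hbb⟩ := exists_pair_of_sum_eq_one
    (t := fun b b' => (((1 : Matrix (Fin dA) (Fin dA) ℂ) ⊗ₖ (N' b' * N b)) * ρAB).trace)
    (by
      simp only [sum_trace_kronecker_right]
      simp only [← Finset.sum_mul, hNsum, hN'sum, one_mul]
      exact hone)
    (hmarg l₁ N hNsum) (hmarg l₂ N' hN'sum) hC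
  have hout : ∀ x, ∃ a, c ≤ ((M x a ⊗ₖ N b) * ρAB).trace.re
      ∧ c ≤ ((M x a ⊗ₖ N' b') * ρAB).trace.re := by
    intro x
    refine exists_common_outcome (w := fun a => ((M x a ⊗ₖ (N' b' * N b)) * ρAB).trace)
      (fun a => trace_mul_re_nonneg ((hMpos x a).kronecker (hNpos b)) hρAB.1)
      (fun a => trace_mul_re_nonneg ((hMpos x a).kronecker (hN'pos b')) hρAB.1)
      (fun a => normSq_trace_kronecker_le hρAB.1 (hMpos x a) (hNpos b)
        (posSemidef_one_sub_of_sum hNpos hNsum b) (hN'pos b')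
        (posSemidef_one_sub_of_sum hN'pos hN'sum b')) ?_
    simp only [← Complex.re_sum, sum_trace_kronecker_left, hMsum]
    exact hbb
  choose f hf hf' using hout
  refine bell_le_of_weight s (isBox_quantumBox hρAB hMpos hMsum hNpos hNsum hN'pos hN'sum)
    hc0 hc1 f (fun y => if y = 0 then Fin.castLE (le_max_left l₁ l₂) b
      else Fin.castLE (le_max_right l₁ l₂) b') fun x y => ?_
  by_cases hy : y = 0
  · simpa [quantumBox, hy] using hf x
  · simpa [quantumBox, hy] using hf' x
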